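/- Under (A1)–(A4), suppose T ≥ 1, x_1 ∈ RB, and the algorithm is run with parameters η = ξ·ε/(2·G_f·G_g·√T) and ρ = ε/√T. Then the iterates satisfy g(x_t) ≤ 0 for every t ∈ {1,…,T} with t ≥ 1 + (2·G_g²/σ²)·log(4·G_g·R·√T/ε). -/

import Mathlib

open scoped RealInnerProductSpace Classical

noncomputable def projBall {d : ℕ} (R : ℝ) (v : EuclideanSpace ℝ (Fin d)) :
    EuclideanSpace ℝ (Fin d) := (R / max R ‖v‖) • v

def IsSubgradAt {d : ℕ} (g : EuclideanSpace ℝ (Fin d) → ℝ)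
    (x s : EuclideanSpace ℝ (Fin d)) : Prop :=
  ∀ y, g x + ⟪s, y - x⟫ ≤ g y

/-!
Let `S = {g ≤ -ρ}` be the tightened set and `γ = 1 - σ² / G_g²`. Projecting onto the level set
`{g ≤ -ε}` produces a normal vector some multiple of which is a subgradient there, so (A4) gives the
error bound `σ · dist(x, {g ≤ -ε}) ≤ g x + ε`, and convexity transfers it to the level `-ρ`. A
Polyak step is the projection onto the half-space where the linearization of `g + ρ` is
nonpositive; by the error bound it shrinks the distance to `S` by the factor `√γ`, and since it is
nonexpansive the gradient step costs at most `η G_f`. Hence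
`dist(x_{t+1}, S) ≤ √γ · dist(x_t, S) + η G_f`, and the choice of `η` makes `ρ / (2 G_g)` the
fixed point of this recursion. Once the
geometric term `2 R √γ ^ (t - 1)` is below `ρ / (2 G_g)` as well, `dist(x_t, S) ≤ ρ / G_g`, which
means `g x_t ≤ 0`.
-/

section

open Metric Set

theorem sqrt_one_sub_pow_le_inv {a L : ℝ} (ha : 0 < a) (hL : 0 < L) {n : ℕ}
    (hn : 2 / a * Real.log L ≤ n) : √(1 - a) ^ n ≤ L⁻¹ := by
  have hsqrt : √(1 - a) ≤ Real.exp (-a / 2) := by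
    rw [Real.exp_half]
    exact Real.sqrt_le_sqrt (Real.one_sub_le_exp_neg a)
  have hlog : Real.log L ≤ n * (a / 2) := by
    calc Real.log L = 2 / a * Real.log L * (a / 2) := by field_simp
      _ ≤ n * (a / 2) := by gcongr
  calc √(1 - a) ^ n ≤ Real.exp (-a / 2) ^ n := by gcongr
    _ = Real.exp (n * (-a / 2)) := (Real.exp_nat_mul _ _).symm
    _ ≤ Real.exp (-Real.log L) := Real.exp_le_exp.2 (by linarith)
    _ = L⁻¹ := by rw [Real.exp_neg, Real.exp_log hL]

theorem le_pow_mul_add_of_forall_succ_le {a : ℕ → ℝ} {κ δ : ℝ} (hκ : 0 ≤ κ) (hδ : 0 ≤ δ) (n : ℕ)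
    (h : ∀ k < n, a (k + 1) ≤ κ * a k + (1 - κ) * δ) : a n ≤ κ ^ n * a 0 + δ := by
  have hgeom : a n - δ ≤ κ ^ n * (a 0 - δ) :=
    le_geom (u := fun k => a k - δ) hκ n fun k hk => by linarith [h k hk]
  have hδn : 0 ≤ κ ^ n * δ := by positivity
  linarith

section LinearConstraint

variable {E : Type*} [AddCommGroup E] [Module ℝ E] {g : E → ℝ}

theorem mul_sub_add_mul_sub_nonneg_of_forall_le (hg : ConvexOn ℝ univ g) (ℓ : E →ₗ[ℝ] ℝ) {b c : ℝ}
    (hle : ∀ z, b ≤ ℓ z → c ≤ g z) {z w : E} (hz : ℓ z < b) (hw : b < ℓ w) :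
    0 ≤ (ℓ w - b) * (g z - c) + (b - ℓ z) * (g w - c) := by
  have hpos : 0 < ℓ w - ℓ z := by linarith
  set α := (ℓ w - b) / (ℓ w - ℓ z) with hα
  set β := (b - ℓ z) / (ℓ w - ℓ z) with hβ
  have hα0 : 0 ≤ α := div_nonneg (by linarith) hpos.le
  have hβ0 : 0 ≤ β := div_nonneg (by linarith) hpos.le
  have hsum : α + β = 1 := by rw [hα, hβ]; field_simp; ring
  have hmem : ℓ (α • z + β • w) = b := by
    simp only [map_add, map_smul, smul_eq_mul, hα, hβ]
    field_simp
    ring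
  have hconv : c ≤ α * g z + β * g w :=
    (hle _ hmem.ge).trans (hg.2 (mem_univ z) (mem_univ w) hα0 hβ0 hsum)
  calc (0 : ℝ) ≤ (ℓ w - ℓ z) * (α * g z + β * g w - c) :=
        mul_nonneg hpos.le (sub_nonneg.2 hconv)
    _ = (ℓ w - b) * (g z - c) + (b - ℓ z) * (g w - c) := by
        rw [hα, hβ]; field_simp; ring

/-- The multiplier separates the slopes `(g z - c) / (ℓ z - b)` taken on the two sides of the
hyperplane `ℓ = b`; the value `0` is put among the lower slopes to make it nonnegative. -/
theorem exists_nonneg_multiplier_of_forall_le (hg : ConvexOn ℝ univ g) (ℓ : E →ₗ[ℝ] ℝ) {b c : ℝ}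
    (hslater : ∃ z, b < ℓ z) (hle : ∀ z, b ≤ ℓ z → c ≤ g z) :
    ∃ μ : ℝ, 0 ≤ μ ∧ ∀ z, c + μ * (ℓ z - b) ≤ g z := by
  let slope : E → ℝ := fun z => (g z - c) / (ℓ z - b)
  have hslopes : ∀ r ∈ insert 0 (slope '' {z | ℓ z < b}), ∀ r' ∈ slope '' {w | b < ℓ w},
      r ≤ r' := by
    rintro r (rfl | ⟨z, hz : ℓ z < b, rfl⟩) _ ⟨w, hw : b < ℓ w, rfl⟩
    · exact div_nonneg (sub_nonneg.2 (hle w hw.le)) (sub_pos.2 hw).le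
    · have hcross := mul_sub_add_mul_sub_nonneg_of_forall_le hg ℓ hle hz hw
      rw [div_le_iff_of_neg (sub_neg.2 hz), div_mul_eq_mul_div, div_le_iff₀ (sub_pos.2 hw)]
      linarith
  obtain ⟨μ, hlower, hupper⟩ :=
    exists_between_of_forall_le (insert_nonempty _ _) (Set.Nonempty.image slope hslater) hslopes
  refine ⟨μ, hlower (mem_insert _ _), fun z => ?_⟩
  rcases lt_trichotomy (ℓ z) b with hz | hz | hz
  · have : slope z ≤ μ := hlower (mem_insert_of_mem _ (mem_image_of_mem slope hz))
    rw [div_le_iff_of_neg (sub_neg.2 hz)] at this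
    linarith
  · simpa [hz] using hle z hz.ge
  · have : μ ≤ slope z := hupper (mem_image_of_mem slope hz)
    rw [le_div_iff₀ (sub_pos.2 hz)] at this
    linarith

end LinearConstraint

theorem sub_mul_infDist_sublevel_le {E : Type*} [SeminormedAddCommGroup E] [NormedSpace ℝ E]
    {g : E → ℝ} (hg : ConvexOn ℝ univ g) {c c' : ℝ} {x p : E} (hp : g p ≤ c) (hcc' : c ≤ c')
    (hx : c' < g x) :
    (g x - c) * infDist x {z | g z ≤ c'} ≤ (g x - c') * dist x p := by
  have hpos : 0 < g x - c := by linarith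
  set θ := (g x - c') / (g x - c) with hθ
  have hθ0 : 0 ≤ θ := div_nonneg (by linarith) hpos.le
  have hθ1 : θ ≤ 1 := (div_le_one hpos).2 (by linarith)
  have hmul : (g x - c) * θ = g x - c' := by rw [hθ]; field_simp
  have hmem : g (AffineMap.lineMap x p θ) ≤ c' := by
    rw [AffineMap.lineMap_apply_module]
    calc g ((1 - θ) • x + θ • p) ≤ (1 - θ) * g x + θ * g p :=
          hg.2 (mem_univ x) (mem_univ p) (sub_nonneg.2 hθ1) hθ0 (by ring)
      _ ≤ (1 - θ) * g x + θ * c := by gcongr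
      _ = c' := by linarith
  calc (g x - c) * infDist x {z | g z ≤ c'}
      ≤ (g x - c) * dist x (AffineMap.lineMap x p θ) := by
        gcongr
        exact infDist_le_dist_of_mem hmem
    _ = (g x - c') * dist x p := by
        rw [dist_left_lineMap, Real.norm_of_nonneg hθ0, ← mul_assoc, hmul]

variable {E : Type*} [NormedAddCommGroup E] [InnerProductSpace ℝ E]

/-- The projection onto the closed ball of radius `R` centered at the origin of a real inner product
space; `projBall` is the case of a Euclidean space. -/
noncomputable def ballProj (R : ℝ) (v : E) : E := (R / max R ‖v‖) • v

/-- The projection onto the half-space `{w | ⟪s, w⟫ ≤ b}`. For `s = 0` the junk value `x / 0 = 0`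
makes it the identity, whatever `b` is. -/
noncomputable def halfspaceProj (s : E) (b : ℝ) (v : E) : E :=
  v - (max (⟪s, v⟫ - b) 0 / ‖s‖ ^ 2) • s

theorem norm_ballProj_le {R : ℝ} (hR : 0 ≤ R) (v : E) : ‖ballProj R v‖ ≤ R := by
  have hmax : 0 ≤ max R ‖v‖ := hR.trans (le_max_left _ _)
  rw [ballProj, norm_smul, Real.norm_of_nonneg (div_nonneg hR hmax), div_mul_eq_mul_div]
  exact div_le_of_le_mul₀ hmax hR (by gcongr; exact le_max_right _ _)

theorem norm_ballProj_sub_le {R : ℝ} (hR : 0 < R) (v : E) {p : E} (hp : ‖p‖ ≤ R) :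
    ‖ballProj R v - p‖ ≤ ‖v - p‖ := by
  rw [ballProj]
  rcases le_total ‖v‖ R with hv | hv
  · rw [max_eq_left hv, div_self hR.ne', one_smul]
  rw [max_eq_right hv]
  have hv0 : 0 < ‖v‖ := hR.trans_le hv
  set k := R / ‖v‖
  have hk0 : 0 ≤ k := by positivity
  have hk1 : k ≤ 1 := (div_le_one hv0).2 hv
  have hkv : k * ‖v‖ = R := div_mul_cancel₀ R hv0.ne'
  have hinner : (1 - k) * ⟪v, p⟫ ≤ (1 - k) * (‖v‖ * R) :=
    mul_le_mul_of_nonneg_left ((real_inner_le_norm v p).trans (by gcongr)) (by linarith)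
  refine le_of_sq_le_sq ?_ (norm_nonneg _)
  rw [norm_sub_sq_real, norm_sub_sq_real, norm_smul, Real.norm_of_nonneg hk0, hkv,
    real_inner_smul_left]
  have hkvR : k * (‖v‖ * R) = R ^ 2 := by rw [← mul_assoc, hkv, sq]
  linarith [sq_nonneg (‖v‖ - R)]

theorem norm_sub_div_norm_sq_smul_sq (v s : E) (a : ℝ) :
    ‖v - (a / ‖s‖ ^ 2) • s‖ ^ 2 = ‖v‖ ^ 2 + (a ^ 2 - 2 * (a * ⟪s, v⟫)) / ‖s‖ ^ 2 := by
  rcases eq_or_ne s 0 with rfl | hs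
  · simp
  rw [norm_sub_sq_real, inner_smul_right, norm_smul, mul_pow, Real.norm_eq_abs, sq_abs,
    real_inner_comm]
  field_simp
  ring

theorem norm_halfspaceProj_sub_halfspaceProj_le (s : E) (b : ℝ) (v w : E) :
    ‖halfspaceProj s b v - halfspaceProj s b w‖ ≤ ‖v - w‖ := by
  set a := max (⟪s, v⟫ - b) 0 - max (⟪s, w⟫ - b) 0 with ha
  have hmono : a ^ 2 ≤ a * ⟪s, v - w⟫ := by
    rw [inner_sub_right]
    rcases max_cases (⟪s, v⟫ - b) 0 with ⟨hv, _⟩ | ⟨hv, _⟩ <;>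
      rcases max_cases (⟪s, w⟫ - b) 0 with ⟨hw, _⟩ | ⟨hw, _⟩ <;> rw [ha, hv, hw] <;> nlinarith
  have hsub : halfspaceProj s b v - halfspaceProj s b w = (v - w) - (a / ‖s‖ ^ 2) • s := by
    rw [halfspaceProj, halfspaceProj, ha, sub_div]
    module
  refine le_of_sq_le_sq ?_ (norm_nonneg _)
  rw [hsub, norm_sub_div_norm_sq_smul_sq, add_le_iff_nonpos_right]
  exact div_nonpos_of_nonpos_of_nonneg (by linarith [sq_nonneg a]) (sq_nonneg _)

theorem norm_halfspaceProj_sub_sq_le {s p : E} {b : ℝ} (hp : ⟪s, p⟫ ≤ b) (v : E) :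
    ‖halfspaceProj s b v - p‖ ^ 2 ≤ ‖v - p‖ ^ 2 - max (⟪s, v⟫ - b) 0 ^ 2 / ‖s‖ ^ 2 := by
  set a := max (⟪s, v⟫ - b) 0 with ha
  have hsq : a ^ 2 ≤ a * ⟪s, v - p⟫ := by
    rw [inner_sub_right]
    rcases max_cases (⟪s, v⟫ - b) 0 with ⟨hv, _⟩ | ⟨hv, _⟩ <;> rw [ha, hv] <;> nlinarith
  rw [halfspaceProj, sub_right_comm, norm_sub_div_norm_sq_smul_sq, sub_eq_add_neg (‖v - p‖ ^ 2),
    ← neg_div]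
  gcongr
  linarith

theorem exists_mem_infDist_eq_norm_sub [CompleteSpace E] {K : Set E} (hne : K.Nonempty)
    (hclosed : IsClosed K) (hconv : Convex ℝ K) (x : E) :
    ∃ p ∈ K, infDist x K = ‖x - p‖ ∧ ∀ w ∈ K, ⟪x - p, w - p⟫ ≤ 0 := by
  obtain ⟨p, hp, hmin⟩ := exists_norm_eq_iInf_of_complete_convex hne hclosed.isComplete hconv x
  refine ⟨p, hp, ?_, (norm_eq_iInf_iff_real_inner_le_zero hconv hp).1 hmin⟩
  simp only [infDist_eq_iInf, dist_eq_norm, hmin]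

theorem inner_neg_of_lt_of_forall_inner_nonpos {g : E → ℝ} (hcont : Continuous g) {c : ℝ}
    {v q : E} (hv : v ≠ 0) (hnormal : ∀ w, g w ≤ c → ⟪v, w - q⟫ ≤ 0) {z : E} (hz : g z < c) :
    ⟪v, z - q⟫ < 0 := by
  have hline : Continuous fun τ : ℝ => g (z + τ • v) := by fun_prop
  have hnear : ∀ᶠ τ : ℝ in nhds 0, g (z + τ • v) < c :=
    hline.continuousAt.eventually_lt continuousAt_const (by simpa using hz)
  obtain ⟨τ, hτ, hτ0 : 0 < τ⟩ :=
    ((hnear.filter_mono nhdsWithin_le_nhds).and (self_mem_nhdsWithin (s := Ioi 0))).exists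
  have hinner : ⟪v, z + τ • v - q⟫ = ⟪v, z - q⟫ + τ * ‖v‖ ^ 2 := by
    rw [add_sub_right_comm, inner_add_right, inner_smul_right, real_inner_self_eq_norm_sq]
  have hshift : 0 < τ * ‖v‖ ^ 2 := by positivity
  linarith [hnormal _ hτ.le]

section ErrorBound

/-- `s` is a subgradient of `g` at `x`, in any real inner product space; `IsSubgradAt` is the case
of a Euclidean space. -/
def IsSubgradient (g : E → ℝ) (x s : E) : Prop := ∀ y, g x + ⟪s, y - x⟫ ≤ g y

variable {g : E → ℝ} {x s : E}

theorem IsSubgradient.sub_le_inner (h : IsSubgradient g x s) (p : E) :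
    g x - g p ≤ ⟪s, x - p⟫ := by
  have := h p
  rw [← neg_sub x p, inner_neg_right] at this
  linarith

theorem IsSubgradient.sub_le_mul_infDist_sublevel (h : IsSubgradient g x s) {G c : ℝ} (hG : 0 < G)
    (hs : ‖s‖ ≤ G) (hne : {z | g z ≤ c}.Nonempty) :
    g x - c ≤ G * infDist x {z | g z ≤ c} := by
  rw [← div_le_iff₀' hG, le_infDist hne]
  intro p (hp : g p ≤ c)
  rw [div_le_iff₀' hG, dist_eq_norm]
  calc g x - c ≤ g x - g p := by linarith
    _ ≤ ⟪s, x - p⟫ := h.sub_le_inner p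
    _ ≤ ‖s‖ * ‖x - p‖ := real_inner_le_norm _ _
    _ ≤ G * ‖x - p‖ := by gcongr

theorem exists_nonneg_isSubgradient_smul (hg : ConvexOn ℝ univ g) (hcont : Continuous g) {v q : E}
    (hv : v ≠ 0) (hnormal : ∀ w, g w ≤ g q → ⟪v, w - q⟫ ≤ 0) :
    ∃ μ : ℝ, 0 ≤ μ ∧ IsSubgradient g q (μ • v) := by
  have hslater : ⟪v, q⟫ < innerₗ E v (q + v) := by
    rw [innerₗ_apply_apply, inner_add_right, lt_add_iff_pos_right]
    exact real_inner_self_pos.2 hv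
  have hle : ∀ z, ⟪v, q⟫ ≤ innerₗ E v z → g q ≤ g z := fun z hz => by
    by_contra! hlt
    have := inner_neg_of_lt_of_forall_inner_nonpos hcont hv hnormal hlt
    rw [inner_sub_right] at this
    exact absurd hz (by simpa using this)
  obtain ⟨μ, hμ, hsub⟩ := exists_nonneg_multiplier_of_forall_le hg (innerₗ E v) ⟨_, hslater⟩ hle
  refine ⟨μ, hμ, fun z => ?_⟩
  rw [real_inner_smul_left, inner_sub_right]
  exact hsub z

variable [CompleteSpace E]

theorem exists_mem_sublevel_infDist_eq_norm_sub (hg : ConvexOn ℝ univ g) (hcont : Continuous g)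
    {c : ℝ} (hne : {z | g z ≤ c}.Nonempty) (x : E) :
    ∃ p, g p ≤ c ∧ infDist x {z | g z ≤ c} = ‖x - p‖ ∧ ∀ w, g w ≤ c → ⟪x - p, w - p⟫ ≤ 0 :=
  exists_mem_infDist_eq_norm_sub hne (isClosed_le hcont continuous_const)
    (by simpa using hg.convex_le c) x

theorem mul_infDist_sublevel_le (hg : ConvexOn ℝ univ g) (hcont : Continuous g) {σ c : ℝ}
    (hne : {z | g z ≤ c}.Nonempty)
    (hσ : ∀ z, g z = c → ∀ s, IsSubgradient g z s → σ ≤ ‖s‖) (hx : c < g x) :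
    σ * infDist x {z | g z ≤ c} ≤ g x - c := by
  obtain ⟨q, hq, hdist, hnormal⟩ := exists_mem_sublevel_infDist_eq_norm_sub hg hcont hne x
  have hv : x - q ≠ 0 := sub_ne_zero.2 fun h => (hq.trans_lt hx).ne (h ▸ rfl)
  have hqc : g q = c := hq.eq_of_not_lt fun hlt => by
    simpa using inner_neg_of_lt_of_forall_inner_nonpos hcont hv hnormal hlt
  obtain ⟨μ, hμ, hsub⟩ :=
    exists_nonneg_isSubgradient_smul hg hcont hv (q := q) fun w hw => hnormal w (hw.trans hq)
  have hσμ : σ ≤ μ * ‖x - q‖ := by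
    simpa only [norm_smul, Real.norm_of_nonneg hμ] using hσ q hqc _ hsub
  calc σ * infDist x {z | g z ≤ c} = σ * ‖x - q‖ := by rw [hdist]
    _ ≤ μ * ‖x - q‖ * ‖x - q‖ := by gcongr
    _ = ⟪μ • (x - q), x - q⟫ := by
        rw [real_inner_smul_left, real_inner_self_eq_norm_sq, sq, mul_assoc]
    _ ≤ g x - c := by linarith [hsub x]

theorem mul_infDist_sublevel_le_of_le (hg : ConvexOn ℝ univ g) (hcont : Continuous g) {σ c c' : ℝ}
    (hne : {z | g z ≤ c}.Nonempty)
    (hσ : ∀ z, g z = c → ∀ s, IsSubgradient g z s → σ ≤ ‖s‖) (hσ0 : 0 ≤ σ) (hcc' : c ≤ c')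
    (hx : c' < g x) : σ * infDist x {z | g z ≤ c'} ≤ g x - c' := by
  obtain ⟨q, hq, hdist, -⟩ := exists_mem_sublevel_infDist_eq_norm_sub hg hcont hne x
  have hcx : 0 < g x - c := by linarith
  refine le_of_mul_le_mul_left ?_ hcx
  calc (g x - c) * (σ * infDist x {z | g z ≤ c'})
      = σ * ((g x - c) * infDist x {z | g z ≤ c'}) := by ring
    _ ≤ σ * ((g x - c') * dist x q) :=
        mul_le_mul_of_nonneg_left (sub_mul_infDist_sublevel_le hg hq hcc' hx) hσ0
    _ = (g x - c') * (σ * infDist x {z | g z ≤ c}) := by rw [hdist, dist_eq_norm]; ring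
    _ ≤ (g x - c') * (g x - c) :=
        mul_le_mul_of_nonneg_left (mul_infDist_sublevel_le hg hcont hne hσ (hcc'.trans_lt hx))
          (sub_pos.2 hx).le
    _ = (g x - c) * (g x - c') := mul_comm _ _

end ErrorBound

section PolyakStep

/-- The feasibility step of the algorithm: `y` is projected onto the half-space
`{w | g x + ⟪s, w - x⟫ + ρ ≤ 0}`, on which the linearization of `g` at `x` is at most `-ρ`, and then
onto the ball of radius `R`. -/
noncomputable def polyakStep (R ρ : ℝ) (g : E → ℝ) (s x y : E) : E :=
  ballProj R (halfspaceProj s (⟪s, x⟫ - g x - ρ) y)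

variable {g : E → ℝ} {x s : E} {R ρ σ G : ℝ}

theorem polyakStep_eq_ite (R ρ : ℝ) (g : E → ℝ) (s x y : E) [Decidable (s ≠ 0)] :
    polyakStep R ρ g s x y =
      if s ≠ 0 then ballProj R (y - (max (g x + ⟪s, y - x⟫ + ρ) 0 / ‖s‖ ^ 2) • s)
      else ballProj R y := by
  split_ifs with hs
  · have hlin : ⟪s, y⟫ - (⟪s, x⟫ - g x - ρ) = g x + ⟪s, y - x⟫ + ρ := by
      rw [inner_sub_right]
      ring
    rw [polyakStep, halfspaceProj, hlin]
  · simp [polyakStep, halfspaceProj, not_not.1 hs]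

theorem norm_halfspaceProj_sub_le_sqrt_mul (hs : IsSubgradient g x s) (hsG : ‖s‖ ≤ G)
    (hσ : 0 ≤ σ) {p : E} (hp : g p ≤ -ρ) (hx : -ρ < g x) (herr : σ * ‖x - p‖ ≤ g x + ρ) :
    ‖halfspaceProj s (⟪s, x⟫ - g x - ρ) x - p‖ ≤ √(1 - σ ^ 2 / G ^ 2) * ‖x - p‖ := by
  have hlin : g x + ρ ≤ ⟪s, x - p⟫ := by linarith [hs.sub_le_inner p]
  have hs0 : 0 < ‖s‖ := norm_pos_iff.2 fun h => by
    rw [h, inner_zero_left] at hlin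
    linarith
  have hmem : ⟪s, p⟫ ≤ ⟪s, x⟫ - g x - ρ := by
    rw [inner_sub_right] at hlin
    linarith
  have hgain : σ ^ 2 / G ^ 2 * ‖x - p‖ ^ 2 ≤ (g x + ρ) ^ 2 / ‖s‖ ^ 2 := by
    calc σ ^ 2 / G ^ 2 * ‖x - p‖ ^ 2 = (σ * ‖x - p‖) ^ 2 / G ^ 2 := by ring
      _ ≤ (g x + ρ) ^ 2 / ‖s‖ ^ 2 := by gcongr
  have hstep := norm_halfspaceProj_sub_sq_le hmem x
  rw [show ⟪s, x⟫ - (⟪s, x⟫ - g x - ρ) = g x + ρ by ring, max_eq_left (by linarith)] at hstep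
  rw [← Real.sqrt_sq (norm_nonneg (x - p)), ← Real.sqrt_mul' _ (sq_nonneg _)]
  exact Real.le_sqrt_of_sq_le (by linarith)

theorem infDist_polyakStep_le [CompleteSpace E] (hg : ConvexOn ℝ univ g) (hcont : Continuous g)
    (hne : {z | g z ≤ -ρ}.Nonempty) (hball : {z | g z ≤ -ρ} ⊆ closedBall 0 R) (hR : 0 < R)
    (hs : IsSubgradient g x s) (hsG : ‖s‖ ≤ G) (hσ : 0 ≤ σ)
    (herr : -ρ < g x → σ * infDist x {z | g z ≤ -ρ} ≤ g x + ρ) (y : E) :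
    infDist (polyakStep R ρ g s x y) {z | g z ≤ -ρ} ≤
      √(1 - σ ^ 2 / G ^ 2) * infDist x {z | g z ≤ -ρ} + ‖y - x‖ := by
  obtain ⟨p, hp, hdist, -⟩ := exists_mem_sublevel_infDist_eq_norm_sub hg hcont hne x
  set P := halfspaceProj s (⟪s, x⟫ - g x - ρ) with hP
  have hcontract : ‖P x - p‖ ≤ √(1 - σ ^ 2 / G ^ 2) * ‖x - p‖ := by
    rcases le_or_gt (g x) (-ρ) with hx | hx
    · have hxp : x = p := by
        rw [← sub_eq_zero, ← norm_eq_zero, ← hdist]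
        exact infDist_zero_of_mem hx
      have hPx : P x = x := by
        rw [hP, halfspaceProj, max_eq_right (by linarith), zero_div, zero_smul, sub_zero]
      simp [hPx, ← hxp]
    · exact norm_halfspaceProj_sub_le_sqrt_mul hs hsG hσ hp hx (hdist ▸ herr hx)
  calc infDist (polyakStep R ρ g s x y) {z | g z ≤ -ρ}
      ≤ ‖ballProj R (P y) - p‖ := by
        rw [← dist_eq_norm]
        exact infDist_le_dist_of_mem hp
    _ ≤ ‖P y - p‖ := norm_ballProj_sub_le hR _ (mem_closedBall_zero_iff.1 (hball hp))
    _ ≤ ‖P y - P x‖ + ‖P x - p‖ := norm_sub_le_norm_sub_add_norm_sub _ _ _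
    _ ≤ ‖y - x‖ + √(1 - σ ^ 2 / G ^ 2) * ‖x - p‖ :=
        add_le_add (norm_halfspaceProj_sub_halfspaceProj_le _ _ _ _) hcontract
    _ = _ := by rw [hdist, add_comm]

end PolyakStep

section PolyakRun

/-- `x 1, …, x (T + 1)` are iterates of the algorithm in which round `t` moves along `-η • u t`
before the feasibility step made with the subgradient `s t`. The directions `u t` are arbitrary;
online gradient descent takes `u t = ∇f_t (x t)`. -/
structure IsPolyakRun (g : E → ℝ) (R ρ η : ℝ) (T : ℕ) (u x s : ℕ → E) : Prop where
  init : x 1 ∈ closedBall 0 R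
  subgradient : ∀ t ∈ Finset.Icc 1 T, IsSubgradient g (x t) (s t)
  update : ∀ t ∈ Finset.Icc 1 T,
    x (t + 1) = polyakStep R ρ g (s t) (x t) (x t - η • u t)

variable {g : E → ℝ} {R ρ η : ℝ} {T : ℕ} {u x s : ℕ → E}

theorem IsPolyakRun.mem_closedBall (h : IsPolyakRun g R ρ η T u x s) (hR : 0 ≤ R) {t : ℕ}
    (ht : t ∈ Finset.Icc 1 T) : x t ∈ closedBall 0 R := by
  obtain ⟨ht1, htT⟩ := Finset.mem_Icc.1 ht
  obtain ⟨n, rfl⟩ := Nat.exists_eq_add_of_le' ht1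
  rcases n.eq_zero_or_pos with rfl | hn
  · exact h.init
  · rw [h.update n (Finset.mem_Icc.2 ⟨hn, by omega⟩), mem_closedBall_zero_iff]
    exact norm_ballProj_le hR _

theorem IsPolyakRun.infDist_one_le (h : IsPolyakRun g R ρ η T u x s)
    (hne : {z | g z ≤ -ρ}.Nonempty) (hball : {z | g z ≤ -ρ} ⊆ closedBall 0 R) :
    infDist (x 1) {z | g z ≤ -ρ} ≤ 2 * R := by
  obtain ⟨p, hp⟩ := hne
  refine (infDist_le_dist_of_mem hp).trans ?_
  linarith [dist_triangle_right (x 1) p 0, Metric.mem_closedBall.1 h.init,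
    Metric.mem_closedBall.1 (hball hp)]

variable [CompleteSpace E] {σ ε Gf Gg : ℝ}

theorem IsPolyakRun.infDist_succ_le (h : IsPolyakRun g R ρ η T u x s) (hR : 0 < R)
    (hg : ConvexOn ℝ univ g) (hcont : Continuous g) (hball : {z | g z ≤ -ρ} ⊆ closedBall 0 R)
    (hσ : 0 ≤ σ) (hρε : ρ ≤ ε) (hne : ∃ z, g z = -ε)
    (hlevel : ∀ z, g z = -ε → ∀ s, IsSubgradient g z s → σ ≤ ‖s‖) (hη : 0 ≤ η)
    (hu : ∀ t ∈ Finset.Icc 1 T, ‖u t‖ ≤ Gf) (hs : ∀ t ∈ Finset.Icc 1 T, ‖s t‖ ≤ Gg) {t : ℕ}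
    (ht : t ∈ Finset.Icc 1 T) :
    infDist (x (t + 1)) {z | g z ≤ -ρ} ≤
      √(1 - σ ^ 2 / Gg ^ 2) * infDist (x t) {z | g z ≤ -ρ} + η * Gf := by
  have hneε : {z | g z ≤ -ε}.Nonempty := hne.imp fun _ hz => hz.le
  have hneρ : {z | g z ≤ -ρ}.Nonempty := hneε.mono fun _ hz => le_trans hz (neg_le_neg hρε)
  have herr : -ρ < g (x t) → σ * infDist (x t) {z | g z ≤ -ρ} ≤ g (x t) + ρ := fun hx => by
    simpa using
      mul_infDist_sublevel_le_of_le hg hcont hneε hlevel hσ (neg_le_neg hρε) hx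
  have hmove : ‖x t - η • u t - x t‖ ≤ η * Gf := by
    rw [sub_sub_cancel_left, norm_neg, norm_smul, Real.norm_of_nonneg hη]
    exact mul_le_mul_of_nonneg_left (hu t ht) hη
  rw [h.update t ht]
  exact (infDist_polyakStep_le hg hcont hneρ hball hR (h.subgradient t ht) (hs t ht) hσ herr
    _).trans (by gcongr)

theorem IsPolyakRun.nonpos_of_pow_le (h : IsPolyakRun g R ρ η T u x s) (hR : 0 < R)
    (hg : ConvexOn ℝ univ g) (hcont : Continuous g) (hball : {z | g z ≤ 0} ⊆ closedBall 0 R)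
    (hGg : 0 < Gg) (hσ : 0 ≤ σ) (hρ : 0 ≤ ρ) (hρε : ρ ≤ ε) (hne : ∃ z, g z = -ε)
    (hlevel : ∀ z, g z = -ε → ∀ s, IsSubgradient g z s → σ ≤ ‖s‖) (hη : 0 ≤ η)
    (hηGf : η * Gf ≤ (1 - √(1 - σ ^ 2 / Gg ^ 2)) * (ρ / (2 * Gg)))
    (hu : ∀ t ∈ Finset.Icc 1 T, ‖u t‖ ≤ Gf) (hs : ∀ t ∈ Finset.Icc 1 T, ‖s t‖ ≤ Gg) {n : ℕ}
    (hn : n + 1 ∈ Finset.Icc 1 T)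
    (hpow : √(1 - σ ^ 2 / Gg ^ 2) ^ n * (2 * R) ≤ ρ / (2 * Gg)) : g (x (n + 1)) ≤ 0 := by
  have hneρ : {z | g z ≤ -ρ}.Nonempty := hne.imp fun z hz => hz.trans_le (neg_le_neg hρε)
  have hballρ : {z | g z ≤ -ρ} ⊆ closedBall 0 R := fun z (hz : g z ≤ -ρ) =>
    hball (hz.trans (neg_nonpos.2 hρ))
  have hdist : infDist (x (n + 1)) {z | g z ≤ -ρ} ≤
      √(1 - σ ^ 2 / Gg ^ 2) ^ n * infDist (x 1) {z | g z ≤ -ρ} + ρ / (2 * Gg) := by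
    refine le_pow_mul_add_of_forall_succ_le (a := fun k => infDist (x (k + 1)) {z | g z ≤ -ρ})
      (Real.sqrt_nonneg _) (by positivity) n fun k hk => ?_
    have hk' : k + 1 ∈ Finset.Icc 1 T := by
      rw [Finset.mem_Icc] at hn ⊢
      omega
    exact (h.infDist_succ_le hR hg hcont hballρ hσ hρε hne hlevel hη hu hs hk').trans (by gcongr)
  have hfeas : g (x (n + 1)) + ρ ≤ Gg * infDist (x (n + 1)) {z | g z ≤ -ρ} := by
    simpa using (h.subgradient _ hn).sub_le_mul_infDist_sublevel hGg (hs _ hn) hneρ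
  have hsmall : Gg * infDist (x (n + 1)) {z | g z ≤ -ρ} ≤ ρ := by
    calc Gg * infDist (x (n + 1)) {z | g z ≤ -ρ}
        ≤ Gg * (√(1 - σ ^ 2 / Gg ^ 2) ^ n * (2 * R) + ρ / (2 * Gg)) := by
          gcongr
          exact hdist.trans (by gcongr; exact h.infDist_one_le hneρ hballρ)
      _ ≤ Gg * (ρ / (2 * Gg) + ρ / (2 * Gg)) := by gcongr
      _ = ρ := by field_simp; ring
  linarith

theorem stmt5_general (hrun : IsPolyakRun g R ρ η T u x s) (hR : 0 < R) (hGf : 0 < Gf)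
    (hGg : 0 < Gg) (hg : ConvexOn ℝ univ g) (hcont : Continuous g)
    (hball : {z | g z ≤ 0} ⊆ closedBall 0 R) (hu : ∀ t ∈ Finset.Icc 1 T, ‖u t‖ ≤ Gf)
    (hs : ∀ t ∈ Finset.Icc 1 T, ‖s t‖ ≤ Gg) (hσ : 0 < σ) (hε : 0 < ε) (hne : ∃ z, g z = -ε)
    (hlevel : ∀ z, g z = -ε → ∀ s, IsSubgradient g z s → σ ≤ ‖s‖)
    (hη : η = (1 - √(1 - σ ^ 2 / Gg ^ 2)) * ε / (2 * Gf * Gg * √T)) (hρ : ρ = ε / √T) :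
    ∀ t ∈ Finset.Icc 1 T, 1 + 2 * Gg ^ 2 / σ ^ 2 * Real.log (4 * Gg * R * √T / ε) ≤ (t : ℝ) →
      g (x t) ≤ 0 := by
  intro t ht hlate
  obtain ⟨ht1, htT⟩ := Finset.mem_Icc.1 ht
  obtain ⟨n, rfl⟩ := Nat.exists_eq_add_of_le' ht1
  have hT : 1 ≤ √(T : ℝ) := Real.one_le_sqrt.2 (by exact_mod_cast ht1.trans htT)
  have hξ : 0 ≤ 1 - √(1 - σ ^ 2 / Gg ^ 2) :=
    sub_nonneg.2 (Real.sqrt_le_one.2 (sub_le_self 1 (by positivity)))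
  have hρ0 : 0 ≤ ρ := hρ ▸ by positivity
  have hρε : ρ ≤ ε := hρ ▸ div_le_self hε.le hT
  have hη0 : 0 ≤ η := hη ▸ by positivity
  have hηGf : η * Gf = (1 - √(1 - σ ^ 2 / Gg ^ 2)) * (ρ / (2 * Gg)) := by
    rw [hη, hρ]
    field_simp
  have hdecay : √(1 - σ ^ 2 / Gg ^ 2) ^ n ≤ (4 * Gg * R * √T / ε)⁻¹ := by
    refine sqrt_one_sub_pow_le_inv (by positivity) (by positivity) ?_
    rw [div_div_eq_mul_div]
    push_cast at hlate
    linarith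
  refine hrun.nonpos_of_pow_le hR hg hcont hball hGg hσ.le hρ0 hρε hne hlevel hη0 hηGf.le hu hs
    ht ?_
  calc √(1 - σ ^ 2 / Gg ^ 2) ^ n * (2 * R) ≤ (4 * Gg * R * √T / ε)⁻¹ * (2 * R) := by gcongr
    _ = ρ / (2 * Gg) := by rw [hρ]; field_simp; norm_num

end PolyakRun

end

theorem stmt5 {d T : ℕ} (hT : 1 ≤ T)
    {R Gf Gg ε σ η ρ : ℝ}
    (g : EuclideanSpace ℝ (Fin d) → ℝ)
    (f : ℕ → EuclideanSpace ℝ (Fin d) → ℝ)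
    (x y s : ℕ → EuclideanSpace ℝ (Fin d))
    (hR : 0 < R) (hGf : 0 < Gf) (hGg : 0 < Gg)
    (hgconv : ConvexOn ℝ Set.univ g)
    (hA1 : {z : EuclideanSpace ℝ (Fin d) | g z ≤ 0} ⊆ Metric.closedBall 0 R)
    (hfconv : ∀ t ∈ Finset.Icc 1 T, ConvexOn ℝ Set.univ (f t))
    (hfdiff : ∀ t ∈ Finset.Icc 1 T, Differentiable ℝ (f t))
    (hA2 : ∀ t ∈ Finset.Icc 1 T, ∀ z ∈ Metric.closedBall (0 : EuclideanSpace ℝ (Fin d)) R,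
      ‖gradient (f t) z‖ ≤ Gf)
    (hA3 : ∀ z ∈ Metric.closedBall (0 : EuclideanSpace ℝ (Fin d)) R,
      ∀ sz, IsSubgradAt g z sz → ‖sz‖ ≤ Gg)
    (hσ : 0 < σ) (hε : 0 < ε) (hσGg : σ ≤ Gg)
    (hA4ne : ∃ z, g z = -ε)
    (hA4 : ∀ z : EuclideanSpace ℝ (Fin d), g z = -ε → ∀ sz, IsSubgradAt g z sz → σ ≤ ‖sz‖)
    (hx1 : x 1 ∈ Metric.closedBall (0 : EuclideanSpace ℝ (Fin d)) R)
    (hηdef : η = (1 - Real.sqrt (1 - σ ^ 2 / Gg ^ 2)) * ε / (2 * Gf * Gg * Real.sqrt T))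
    (hρdef : ρ = ε / Real.sqrt T)
    (hs : ∀ t ∈ Finset.Icc 1 T, IsSubgradAt g (x t) (s t))
    (hy : ∀ t ∈ Finset.Icc 1 T, y t = x t - η • gradient (f t) (x t))
    (hupd : ∀ t ∈ Finset.Icc 1 T,
      x (t + 1) = if s t ≠ 0 then
          projBall R (y t - ((max (g (x t) + ⟪s t, y t - x t⟫ + ρ) 0) / ‖s t‖ ^ 2) • s t)
        else projBall R (y t))
    :
    ∀ t ∈ Finset.Icc 1 T,
      1 + 2 * Gg ^ 2 / σ ^ 2 * Real.log (4 * Gg * R * Real.sqrt T / ε) ≤ (t : ℝ) →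
        g (x t) ≤ 0 := by
  have hrun : IsPolyakRun g R ρ η T (fun t => gradient (f t) (x t)) x s :=
    ⟨hx1, hs, fun t ht => by rw [hupd t ht, polyakStep_eq_ite, ← hy t ht]; rfl⟩
  have hmem {t : ℕ} (ht : t ∈ Finset.Icc 1 T) := hrun.mem_closedBall hR.le ht
  exact stmt5_general hrun hR hGf hGg hgconv (continuousOn_univ.1 (hgconv.continuousOn isOpen_univ))
    hA1 (fun t ht => hA2 t ht _ (hmem ht)) (fun t ht => hA3 _ (hmem ht) _ (hs t ht)) hσ hε hA4ne
    hA4 hηdef hρdef
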